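/- Let (f_j)_{j≥1} be real numbers in [0,1] and let (Δ_j)_{j≥1} be probability distributions on the nonnegative integers. Define the delayed composite observation x_t = Σ_{j=1}^t f_j·Δ_j({t − j}) for t ≥ 1. Then for all integers 1 ≤ a ≤ b, | Σ_{t=a}^{b} (x_t − f_t) | ≤ Σ_{j=1}^{a−1} Δ_j({x > a − 1 − j}) + Σ_{j=1}^{b} Δ_j({x > b − j}). -/

import Mathlib

open Finset

/-- The tail probability `p({x ≥ s})` of a distribution `p` on the nonnegative integers. -/
noncomputable def tailProb (p : ℕ → ℝ) (s : ℕ) : ℝ :=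
  ∑' x : ℕ, if s ≤ x then p x else 0

/-!
Call the part of the rewards `f 1, …, f n` still undelivered after time `n` the *pending reward*
at `n`. At each step it gains the new reward and loses the observation, so the sum of `x t - f t`
over the window telescopes to the pending reward at `a - 1` minus the pending reward at `b`.
Each pending reward is bounded by the triangle inequality.
-/

theorem tailProb_nonneg {p : ℕ → ℝ} (hp : ∀ x, 0 ≤ p x) (s : ℕ) : 0 ≤ tailProb p s :=
  tsum_nonneg fun x => ite_nonneg (hp x) le_rfl

theorem tailProb_zero (p : ℕ → ℝ) : tailProb p 0 = ∑' x, p x := by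
  simp [tailProb]

theorem tailProb_eq_add_tailProb_succ {p : ℕ → ℝ} (hp : Summable p) (s : ℕ) :
    tailProb p s = p s + tailProb p (s + 1) := by
  have hsummable : Summable fun x => if s ≤ x then p x else 0 :=
    (hp.indicator {x | s ≤ x}).congr fun x => by simp [Set.indicator_apply]
  rw [tailProb, hsummable.tsum_eq_add_tsum_ite s, if_pos le_rfl, tailProb]
  congr 2 with x
  grind

section PendingReward

variable {E : Type*}

section AddCommMonoid

variable [AddCommMonoid E] [Module ℝ E]

/-- The delayed composite observation at time `t`: the reward `f j` generated at time `j` is spread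
over the times `j, j + 1, …` with weights `Δ j 0, Δ j 1, …`. Rewards start at time `1` and may be
vectors. -/
def delayedObservation (f : ℕ → E) (Δ : ℕ → ℕ → ℝ) (t : ℕ) : E :=
  ∑ j ∈ Icc 1 t, Δ j (t - j) • f j

/-- The pending reward at time `n`: the part of the rewards generated at times `1, …, n` that is
observed only after time `n`. -/
noncomputable def pendingReward (f : ℕ → E) (Δ : ℕ → ℕ → ℝ) (n : ℕ) : E :=
  ∑ j ∈ Icc 1 n, tailProb (Δ j) (n - j + 1) • f j

theorem delayedObservation_add_pendingReward_succ (f : ℕ → E) {Δ : ℕ → ℕ → ℝ}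
    (hsum : ∀ j, HasSum (Δ j) 1) (n : ℕ) :
    delayedObservation f Δ (n + 1) + pendingReward f Δ (n + 1) =
      pendingReward f Δ n + f (n + 1) := by
  calc delayedObservation f Δ (n + 1) + pendingReward f Δ (n + 1)
      = ∑ j ∈ Icc 1 (n + 1), tailProb (Δ j) (n + 1 - j) • f j := by
        simp only [delayedObservation, pendingReward, ← sum_add_distrib, ← add_smul,
          ← tailProb_eq_add_tailProb_succ (hsum _).summable]
    _ = (∑ j ∈ Icc 1 n, tailProb (Δ j) (n + 1 - j) • f j) + f (n + 1) := by
        rw [sum_Icc_succ_top (Nat.le_add_left 1 n), Nat.sub_self, tailProb_zero,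
          (hsum _).tsum_eq, one_smul]
    _ = pendingReward f Δ n + f (n + 1) := by
        congr 1
        refine sum_congr rfl fun j hj => ?_
        rw [Nat.sub_add_comm (mem_Icc.mp hj).2]

end AddCommMonoid

theorem sum_Icc_delayedObservation_sub [AddCommGroup E] [Module ℝ E] (f : ℕ → E)
    {Δ : ℕ → ℕ → ℝ} (hsum : ∀ j, HasSum (Δ j) 1) {m n : ℕ} (hmn : m ≤ n) :
    ∑ t ∈ Icc (m + 1) n, (delayedObservation f Δ t - f t) =
      pendingReward f Δ m - pendingReward f Δ n := by
  induction n, hmn using Nat.le_induction with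
  | base => simp
  | succ n hmn ih =>
    have hstep : delayedObservation f Δ (n + 1) - f (n + 1) =
        pendingReward f Δ n - pendingReward f Δ (n + 1) :=
      sub_eq_sub_iff_add_eq_add.mpr (delayedObservation_add_pendingReward_succ f hsum n)
    rw [sum_Icc_succ_top (Nat.succ_le_succ hmn), ih, hstep, sub_add_sub_cancel]

variable [SeminormedAddCommGroup E] [NormedSpace ℝ E]

theorem norm_pendingReward_le {f : ℕ → E} (hf : ∀ j, ‖f j‖ ≤ 1) {Δ : ℕ → ℕ → ℝ}
    (hnn : ∀ j x, 0 ≤ Δ j x) (n : ℕ) :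
    ‖pendingReward f Δ n‖ ≤ ∑ j ∈ Icc 1 n, tailProb (Δ j) (n - j + 1) := by
  refine norm_sum_le_of_le _ fun j _ => ?_
  have htail := tailProb_nonneg (hnn j) (n - j + 1)
  rw [norm_smul_of_nonneg htail]
  exact mul_le_of_le_one_right htail (hf j)

theorem delay_window_deviation_bound_general {f : ℕ → E} (hf : ∀ j, ‖f j‖ ≤ 1)
    {Δ : ℕ → ℕ → ℝ} (hnn : ∀ j x, 0 ≤ Δ j x) (hsum : ∀ j, HasSum (Δ j) 1)
    {a b : ℕ} (ha : 1 ≤ a) (hab : a ≤ b) :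
    ‖∑ t ∈ Icc a b, (delayedObservation f Δ t - f t)‖ ≤
      (∑ j ∈ Icc 1 (a - 1), tailProb (Δ j) (a - 1 - j + 1)) +
        ∑ j ∈ Icc 1 b, tailProb (Δ j) (b - j + 1) := by
  have htelescope : ∑ t ∈ Icc a b, (delayedObservation f Δ t - f t) =
      pendingReward f Δ (a - 1) - pendingReward f Δ b := by
    simpa only [Nat.sub_add_cancel ha] using
      sum_Icc_delayedObservation_sub f hsum ((Nat.sub_le a 1).trans hab)
  rw [htelescope]
  exact norm_sub_le_of_le (norm_pendingReward_le hf hnn _) (norm_pendingReward_le hf hnn _)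

end PendingReward

/-- The deviation of the delayed composite observations from the rewards on a window `[a, b]`
is bounded by the mass of past rewards leaking into the window plus the mass of the window's
rewards escaping past `b`. -/
theorem delay_window_deviation_bound
    (f : ℕ → ℝ) (hf : ∀ j, f j ∈ Set.Icc (0 : ℝ) 1)
    (Δ : ℕ → ℕ → ℝ) (hnn : ∀ j x, 0 ≤ Δ j x) (hsum : ∀ j, HasSum (Δ j) 1)
    (x : ℕ → ℝ) (hx : ∀ t : ℕ, x t = ∑ j ∈ Finset.Icc 1 t, f j * Δ j (t - j))
    (a b : ℕ) (ha : 1 ≤ a) (hab : a ≤ b) :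
    |∑ t ∈ Finset.Icc a b, (x t - f t)| ≤
      (∑ j ∈ Finset.Icc 1 (a - 1), tailProb (Δ j) (a - 1 - j + 1)) +
        ∑ j ∈ Finset.Icc 1 b, tailProb (Δ j) (b - j + 1) := by
  obtain rfl : x = delayedObservation f Δ :=
    funext fun t => by simp only [hx, delayedObservation, smul_eq_mul, mul_comm]
  exact delay_window_deviation_bound_general
    (fun j => (Real.norm_of_nonneg (hf j).1).trans_le (hf j).2) hnn hsum ha hab
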